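/- arXiv:2006.01116 — 2 statements merged into one kernel-verified Lean document; each statement's English description precedes it below -/
import Mathlib

section
/- Let d ≥ 4 be an integer and let C, ε be positive reals. Then there exist γ with 0 < γ < ε and n₀ such that the following holds. Let D be a digraph with n ≥ n₀ vertices, m ≤ Cn arcs, and minimum outdegree at least d, and let X, Y be a partition of V(D) with |X| ≤ γn, e(X) = 0, and d(y) ≤ γn for every y ∈ Y. Set θ := min{|θ(X₁,X₂)| : X₁,X₂ a partition of X} and X' := {x ∈ X : s(x) ≥ θ}. If |X'| = 1, then V(D) admits a bipartition V₁, V₂ with min{e(V₁,V₂), e(V₂,V₁)} ≥ ((d−1)/(2(2d−1)) − ε)·m. -/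
open Finset

/-- Number of arcs of the digraph `A` directed from a vertex of `S` to a vertex of `T`. -/
def dArcs {V : Type} [Fintype V] [DecidableEq V] (A : V → V → Prop) [DecidableRel A]
    (S T : Finset V) : ℕ :=
  ((S ×ˢ T).filter fun p => A p.1 p.2).card

/-- Outdegree of `x`. -/
def outDeg {V : Type} [Fintype V] (A : V → V → Prop) [DecidableRel A] (x : V) : ℕ :=
  (Finset.univ.filter fun y => A x y).card

/-- Indegree of `x`. -/
def inDeg {V : Type} [Fintype V] (A : V → V → Prop) [DecidableRel A] (x : V) : ℕ :=
  (Finset.univ.filter fun y => A y x).card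

/-- Degree of `x`: outdegree plus indegree. -/
def deg {V : Type} [Fintype V] (A : V → V → Prop) [DecidableRel A] (x : V) : ℕ :=
  outDeg A x + inDeg A x

/-- `s(x) = max{d⁺(x) − d⁻(x), d⁻(x) − d⁺(x)}`. -/
def sVal {V : Type} [Fintype V] (A : V → V → Prop) [DecidableRel A] (x : V) : ℤ :=
  max ((outDeg A x : ℤ) - (inDeg A x : ℤ)) ((inDeg A x : ℤ) - (outDeg A x : ℤ))

/-- The gap `θ(X₁,X₂) = (e(X₁,Y)+e(Y,X₂)) − (e(X₂,Y)+e(Y,X₁))`. -/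
def gap {V : Type} [Fintype V] [DecidableEq V] (A : V → V → Prop) [DecidableRel A]
    (X₁ X₂ Y : Finset V) : ℤ :=
  ((dArcs A X₁ Y : ℤ) + (dArcs A Y X₂ : ℤ)) - ((dArcs A X₂ Y : ℤ) + (dArcs A Y X₁ : ℤ))

/-!
A bipartition is a signing `σ : V → {1, -1}`, and the numbers of arcs from each of its two parts to
the other are `(m + c ± s) / 4`, where `c` is the excess of `σ` as a cut and `s` the sum of the
values `σ v * (d⁺ v - d⁻ v)`. So we want a signing for which `c - |s|` is large. On `X`, which spans
no arc, we take a signing of minimum gap `θ`. On `Y`, where the degrees are small, we gain in each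
component separately: a component with at most `2 * d - 1` vertices has a cut of excess at least
`1 / (2 * d - 1)` of the number of its arcs, and in a larger component a spanning tree yields an
excess of about half its number of vertices. As one may flip one part against the other, `c` is
superadditive and `s` accumulates only in the quadratic mean, up to errors which are small compared
with `m`. Finally, if only one vertex `x` is huge, then flipping the other vertices of `X` one by
one shows that `θ ≤ s(x) - ∑ s(y)`, the sum being over the other vertices `y` of `X`. This is small
enough to be paid for: `s(x)` is at most `|Y|` and at most `d(x)`, and the arcs from `Y` to the
other vertices of `X`, which are lost for the gain inside `Y`, either enlarge `∑ s(y)` or are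
matched by arcs from `X` to `Y`, which enlarge `m`.
-/

section Signing

/-- A `±1`-valued function, encoding the bipartition of the vertices into its two level sets. -/
def IsSigning {V : Type*} (σ : V → ℝ) : Prop :=
  ∀ v, σ v = 1 ∨ σ v = -1

/-- The excess of a signing as a cut of `S`: the weight of the ordered pairs in `S` which `σ`
separates, minus the weight of those which it does not separate. -/
def signCut {V : Type*} (w : V → V → ℝ) (σ : V → ℝ) (S : Finset V) : ℝ :=
  -∑ u ∈ S, ∑ v ∈ S, w u v * σ u * σ v

/-- The sum of `s` over `S` with the signs prescribed by `σ`. -/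
def signSum {V : Type*} (s σ : V → ℝ) (S : Finset V) : ℝ :=
  ∑ v ∈ S, s v * σ v

variable {V : Type*} {w : V → V → ℝ} {s σ τ : V → ℝ} {S T : Finset V}

theorem isSigning_one : IsSigning (1 : V → ℝ) := fun _ => Or.inl rfl

theorem IsSigning.neg (hσ : IsSigning σ) : IsSigning (-σ) := fun v =>
  (hσ v).symm.imp (fun h => by simp [h]) fun h => by simp [h]

theorem IsSigning.piecewise [DecidableEq V] (hσ : IsSigning σ) (hτ : IsSigning τ) :
    IsSigning (S.piecewise σ τ) := fun v =>
  S.piecewise_cases (i := v) σ τ (fun x => x = 1 ∨ x = -1) (hσ v) (hτ v)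

theorem signCut_neg : signCut w (-σ) S = signCut w σ S := by
  simp [signCut]

theorem signSum_neg : signSum s (-σ) S = -signSum s σ S := by
  simp [signSum]

theorem signCut_eq_zero (h : ∀ u ∈ S, ∀ v ∈ S, w u v = 0) : signCut w σ S = 0 := by
  rw [signCut, sum_eq_zero fun u hu => sum_eq_zero fun v hv => by simp [h u hu v hv], neg_zero]

theorem signSum_piecewise [DecidableEq V] (hST : Disjoint S T) :
    signSum s (S.piecewise σ τ) (S ∪ T) = signSum s σ S + signSum s τ T := by
  rw [signSum, sum_union hST]
  congr 1
  · exact sum_congr rfl fun v hv => by rw [piecewise_eq_of_mem _ _ _ hv]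
  · exact sum_congr rfl fun v hv => by rw [piecewise_eq_of_notMem _ _ _ (disjoint_right.1 hST hv)]

theorem signCut_piecewise [DecidableEq V] (hST : Disjoint S T) :
    signCut w (S.piecewise σ τ) (S ∪ T) = signCut w σ S + signCut w τ T
      - ∑ u ∈ S, ∑ v ∈ T, (w u v + w v u) * (σ u * τ v) := by
  have hσ : ∀ v ∈ S, S.piecewise σ τ v = σ v := fun v => piecewise_eq_of_mem S σ τ
  have hτ : ∀ v ∈ T, S.piecewise σ τ v = τ v := fun v hv =>
    piecewise_eq_of_notMem S σ τ (disjoint_right.1 hST hv)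
  have hSS : ∑ u ∈ S, ∑ v ∈ S, w u v * S.piecewise σ τ u * S.piecewise σ τ v
      = ∑ u ∈ S, ∑ v ∈ S, w u v * σ u * σ v :=
    sum_congr rfl fun u hu => sum_congr rfl fun v hv => by rw [hσ u hu, hσ v hv]
  have hTT : ∑ u ∈ T, ∑ v ∈ T, w u v * S.piecewise σ τ u * S.piecewise σ τ v
      = ∑ u ∈ T, ∑ v ∈ T, w u v * τ u * τ v :=
    sum_congr rfl fun u hu => sum_congr rfl fun v hv => by rw [hτ u hu, hτ v hv]
  have hcross : ∑ u ∈ S, ∑ v ∈ T, w u v * S.piecewise σ τ u * S.piecewise σ τ v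
      + ∑ u ∈ T, ∑ v ∈ S, w u v * S.piecewise σ τ u * S.piecewise σ τ v
      = ∑ u ∈ S, ∑ v ∈ T, (w u v + w v u) * (σ u * τ v) := by
    rw [sum_comm (s := T)]
    simp only [← sum_add_distrib]
    refine sum_congr rfl fun u hu => sum_congr rfl fun v hv => ?_
    rw [hσ u hu, hτ v hv]
    ring
  simp only [signCut, sum_union hST, sum_add_distrib]
  linarith

theorem exists_isSigning_union [DecidableEq V] (hST : Disjoint S T) (hσ : IsSigning σ)
    (hτ : IsSigning τ) (ν : ℝ) :
    ∃ ρ, IsSigning ρ ∧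
      (signSum s ρ (S ∪ T) = signSum s σ S + signSum s τ T ∧
          signCut w σ S + signCut w τ T + ν ≤ signCut w ρ (S ∪ T) ∨
        signSum s ρ (S ∪ T) = signSum s σ S - signSum s τ T ∧
          signCut w σ S + signCut w τ T - ν ≤ signCut w ρ (S ∪ T)) := by
  rcases le_total (∑ u ∈ S, ∑ v ∈ T, (w u v + w v u) * (σ u * τ v) + ν) 0 with h | h
  · refine ⟨S.piecewise σ τ, hσ.piecewise hτ, Or.inl ⟨signSum_piecewise hST, ?_⟩⟩
    rw [signCut_piecewise hST]
    linarith
  · refine ⟨S.piecewise σ (-τ), hσ.piecewise hτ.neg, Or.inr ⟨?_, ?_⟩⟩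
    · rw [signSum_piecewise hST, signSum_neg, sub_eq_add_neg]
    · rw [signCut_piecewise hST, signCut_neg]
      simp only [Pi.neg_apply, mul_neg, sum_neg_distrib]
      linarith

theorem exists_isSigning_union_sub_abs [DecidableEq V] (hST : Disjoint S T) (hσ : IsSigning σ)
    (hτ : IsSigning τ) :
    ∃ ρ, IsSigning ρ ∧
      signCut w σ S - |signSum s σ S| + (signCut w τ T - |signSum s τ T|) ≤
        signCut w ρ (S ∪ T) - |signSum s ρ (S ∪ T)| := by
  obtain ⟨ρ, hρ, ⟨hsum, hcut⟩ | ⟨hsum, hcut⟩⟩ :=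
    exists_isSigning_union (w := w) (s := s) hST hσ hτ 0
  · exact ⟨ρ, hρ, by rw [hsum]; linarith [abs_add_le (signSum s σ S) (signSum s τ T)]⟩
  · exact ⟨ρ, hρ, by rw [hsum]; linarith [abs_sub (signSum s σ S) (signSum s τ T)]⟩

theorem exists_isSigning_signSum_eq (s : V → ℝ) {R X : Finset V} (hR : R ⊆ X) :
    ∃ σ, IsSigning σ ∧ signSum s σ X = ∑ v ∈ X, |s v| - 2 * ∑ v ∈ R, |s v| := by
  classical
  obtain ⟨σ, hσ, hsum⟩ : ∃ σ, IsSigning σ ∧ ∀ S, signSum s σ S = ∑ v ∈ S, |s v| := by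
    refine ⟨fun v => if 0 ≤ s v then 1 else -1, fun v => ite_eq_or_eq .., fun S =>
      sum_congr rfl fun v _ => ?_⟩
    dsimp only
    split_ifs with h
    · rw [abs_of_nonneg h, mul_one]
    · rw [abs_of_neg (not_le.1 h), mul_neg_one]
  refine ⟨R.piecewise (-σ) σ, hσ.neg.piecewise hσ, ?_⟩
  have hflip := signSum_piecewise (s := s) (σ := -σ) (τ := σ) (disjoint_sdiff (s := R) (t := X))
  rw [union_sdiff_of_subset hR, signSum_neg, hsum, hsum] at hflip
  linarith [sum_sdiff hR (f := fun v => |s v|)]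

/-- Flip the signs of the terms other than `s x` one by one, starting from the sum of all absolute
values: no step is long enough to jump over the interval `(-θ, θ)`. -/
theorem le_abs_sub_sum_abs_of_forall_isSigning [DecidableEq V] {θ : ℝ} {X : Finset V} {x : V}
    (hx : x ∈ X) (hmin : ∀ σ, IsSigning σ → θ ≤ |signSum s σ X|)
    (hθ : ∀ y ∈ X.erase x, |s y| < θ) : θ ≤ |s x| - ∑ y ∈ X.erase x, |s y| := by
  have hflip : ∀ R ⊆ X, θ ≤ |(∑ v ∈ X, |s v|) - 2 * (∑ v ∈ R, |s v|)| := fun R hR => by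
    obtain ⟨σ, hσ, hsum⟩ := exists_isSigning_signSum_eq s hR
    exact hsum ▸ hmin σ hσ
  have hstay : ∀ R ⊆ X.erase x, θ ≤ ∑ v ∈ X, |s v| - 2 * ∑ v ∈ R, |s v| := fun R => by
    induction R using Finset.induction_on with
    | empty =>
      intro _
      simpa [abs_of_nonneg (sum_nonneg fun v (_ : v ∈ X) => abs_nonneg (s v))] using
        hflip ∅ (empty_subset X)
    | insert z R hz ih =>
      intro hR
      refine (le_abs.1 (hflip _ (hR.trans (erase_subset x X)))).resolve_right fun hneg => ?_
      rw [sum_insert hz] at hneg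
      linarith [ih ((subset_insert z R).trans hR), hθ z (hR (mem_insert_self z R))]
  linarith [hstay _ subset_rfl, add_sum_erase X (fun v => |s v|) hx]

end Signing

section Gains

/-- `Gains w s a μ S t` says that some signing of `S` is worth at least `t`, where the worth of a
signing is its excess as a cut, minus the square of its signed sum divided by `μ`, plus the
allowances `a v` of the vertices of `S`. The squared signed sum makes the worth superadditive over
disjoint sets, as the sign of the cross term can be chosen by flipping one of the two signings. -/
def Gains {V : Type*} (w : V → V → ℝ) (s a : V → ℝ) (μ : ℝ) (S : Finset V) (t : ℝ) : Prop :=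
  ∃ σ, IsSigning σ ∧ t ≤ signCut w σ S - signSum s σ S ^ 2 / μ + ∑ v ∈ S, a v

/-- The allowances `a` are large enough on `S`, and the weighted degrees in `S` small enough, for
every vertex of `S` to pay with its allowance for the penalties which it causes. Here `μ` is the
scale of the squared signed sums, as in `Gains`, and `κ` the least allowance per unit of `|s v|`. -/
structure IsAllowance {V : Type*} (w : V → V → ℝ) (s a : V → ℝ) (κ μ : ℝ) (S : Finset V) :
    Prop where
  κ_pos : 0 < κ
  μ_pos : 0 < μ
  sq_div_le : ∀ v ∈ S, s v ^ 2 / μ ≤ a v / 2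
  mul_abs_le : ∀ v ∈ S, κ * |s v| ≤ a v
  degree_le : ∀ v ∈ S, ∑ u ∈ S, (w u v + w v u) ≤ κ ^ 2 * μ / 4

variable {V : Type*} {w : V → V → ℝ} {s a : V → ℝ} {κ μ : ℝ} {S T : Finset V} {t t' : ℝ}

theorem IsAllowance.mono (h : IsAllowance w s a κ μ T) (hw : ∀ u v, 0 ≤ w u v) (hST : S ⊆ T) :
    IsAllowance w s a κ μ S where
  κ_pos := h.κ_pos
  μ_pos := h.μ_pos
  sq_div_le v hv := h.sq_div_le v (hST hv)
  mul_abs_le v hv := h.mul_abs_le v (hST hv)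
  degree_le v hv := (sum_le_sum_of_subset_of_nonneg hST fun u _ _ =>
    add_nonneg (hw u v) (hw v u)).trans (h.degree_le v (hST hv))

theorem Gains.mono (h : Gains w s a μ S t) (ht : t' ≤ t) : Gains w s a μ S t' :=
  let ⟨σ, hσ, hle⟩ := h
  ⟨σ, hσ, ht.trans hle⟩

theorem gains_empty : Gains w s a μ ∅ 0 :=
  ⟨1, isSigning_one, by simp [signCut, signSum]⟩

theorem gains_singleton (hw : ∀ v, w v v = 0) (v : V) :
    Gains w s a μ {v} (a v - s v ^ 2 / μ) :=
  ⟨1, isSigning_one, by simp [signCut, signSum, hw]⟩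

theorem Gains.union [DecidableEq V] (hST : Disjoint S T) (hS : Gains w s a μ S t)
    (hT : Gains w s a μ T t') : Gains w s a μ (S ∪ T) (t + t') := by
  obtain ⟨σ, hσ, hS⟩ := hS
  obtain ⟨τ, hτ, hT⟩ := hT
  obtain ⟨ρ, hρ, ⟨hsum, hcut⟩ | ⟨hsum, hcut⟩⟩ := exists_isSigning_union (w := w) (s := s) hST hσ hτ
    (2 * signSum s σ S * signSum s τ T / μ)
  · refine ⟨ρ, hρ, ?_⟩
    rw [hsum, sum_union hST, add_sq, add_div, add_div]
    linarith
  · refine ⟨ρ, hρ, ?_⟩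
    rw [hsum, sum_union hST, sub_sq, add_div, sub_div]
    linarith

theorem Gains.of_sdiff [DecidableEq V] {P : Finset V} (hP : P ⊆ S) (hS : Gains w s a μ (S \ P) t)
    (hPt : Gains w s a μ P t') : Gains w s a μ S (t + t') :=
  sdiff_union_of_subset hP ▸ hS.union sdiff_disjoint hPt

theorem gains_of_fibers {ι : Type*} [DecidableEq ι] (f : V → ι) (g : V → ℝ)
    (h : ∀ r ∈ S, Gains w s a μ {v ∈ S | f v = f r} (∑ v ∈ S with f v = f r, g v)) :
    Gains w s a μ S (∑ v ∈ S, g v) := by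
  classical
  induction S using Finset.strongInduction with
  | H S ih =>
  obtain rfl | ⟨r, hr⟩ := S.eq_empty_or_nonempty
  · simpa using gains_empty
  have hsub : {v ∈ S | f v = f r} ⊆ S := filter_subset _ S
  rw [← sum_sdiff hsub]
  refine Gains.of_sdiff hsub (ih _ (sdiff_ssubset hsub ⟨r, by simp [hr]⟩) fun q hq => ?_) (h r hr)
  have hfiber : {v ∈ S \ {v ∈ S | f v = f r} | f v = f q} = {v ∈ S | f v = f q} := by
    ext v
    simp only [mem_filter, mem_sdiff] at hq ⊢
    grind
  rw [hfiber]
  exact h q (mem_sdiff.1 hq).1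

theorem gains_sum_sub (hw : ∀ v, w v v = 0) (S : Finset V) :
    Gains w s a μ S (∑ v ∈ S, (a v - s v ^ 2 / μ)) := by
  classical
  induction S using Finset.induction_on with
  | empty => simpa using gains_empty
  | insert v S hv ih =>
    rw [sum_insert hv, insert_eq]
    exact (gains_singleton hw v).union (disjoint_singleton_left.2 hv) ih

theorem gains_half_sum (hw : ∀ v, w v v = 0) (hs : ∀ v ∈ S, s v ^ 2 / μ ≤ a v / 2) :
    Gains w s a μ S ((∑ v ∈ S, a v) / 2) := by
  rw [sum_div]
  exact (gains_sum_sub hw S).mono (sum_le_sum fun v hv => by linarith [hs v hv])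

theorem gains_zero (hw : ∀ v, w v v = 0) (hμ : 0 < μ) (hs : ∀ v ∈ S, s v ^ 2 / μ ≤ a v / 2) :
    Gains w s a μ S 0 :=
  (gains_half_sum hw hs).mono <| div_nonneg (sum_nonneg fun v hv => by
    linarith [hs v hv, div_nonneg (sq_nonneg (s v)) hμ.le]) zero_le_two

theorem sub_sq_div_le (hμ : 0 < μ) (x y : ℝ) :
    (x - y) ^ 2 / μ ≤ 2 * (x ^ 2 / μ) + 2 * (y ^ 2 / μ) := by
  rw [← mul_div_assoc, ← mul_div_assoc, ← add_div]
  gcongr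
  linarith [sq_nonneg (x + y)]

theorem gains_star_of_light [DecidableEq V] (hw : ∀ v, w v v = 0) (hμ : 0 < μ) {p : V}
    {L : Finset V} (hp : p ∉ L) (hL : ∀ u ∈ L, ∀ v ∈ L, w u v = 0) (hsp : s p ^ 2 / μ ≤ a p / 2)
    (hlight : (∑ v ∈ L, s v) ^ 2 / μ ≤ (∑ v ∈ L, a v) / 2) :
    Gains w s a μ (insert p L) (∑ v ∈ L, (w v p + w p v)) := by
  have hdisj : Disjoint {p} L := disjoint_singleton_left.2 hp
  refine ⟨({p} : Finset V).piecewise 1 (-1), isSigning_one.piecewise isSigning_one.neg, ?_⟩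
  have hcut : signCut w (({p} : Finset V).piecewise 1 (-1)) ({p} ∪ L)
      = ∑ v ∈ L, (w v p + w p v) := by
    rw [signCut_piecewise hdisj, signCut_eq_zero hL, signCut_eq_zero (by simp [hw])]
    simp [sum_add_distrib, add_comm]
  have hsum : signSum s (({p} : Finset V).piecewise 1 (-1)) ({p} ∪ L) = s p - ∑ v ∈ L, s v := by
    rw [signSum_piecewise hdisj, signSum_neg]
    simp [signSum, sub_eq_add_neg]
  rw [insert_eq, hcut, hsum, sum_union hdisj, sum_singleton]
  linarith [sub_sq_div_le hμ (s p) (∑ v ∈ L, s v)]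

theorem gains_pair [DecidableEq V] (hw : ∀ v, w v v = 0) (hμ : 0 < μ) {u v : V} (huv : u ≠ v)
    (hs : ∀ x ∈ ({u, v} : Finset V), s x ^ 2 / μ ≤ a x / 2) :
    Gains w s a μ {u, v} (w u v + w v u) := by
  have := gains_star_of_light (L := {v}) hw hμ (by simpa using huv) (by simp [hw])
    (hs u (by simp)) (by simpa using hs v (by simp))
  simpa [add_comm] using this

/-- Either the signed sums of the leaves are small enough for the leaves to oppose the centre, or
the allowances of the leaves alone exceed the weight of the star. -/
theorem gains_star [DecidableEq V] (hw : ∀ v, w v v = 0) {p : V} {L : Finset V}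
    (h : IsAllowance w s a κ μ (insert p L)) (hp : p ∉ L) (hL : ∀ u ∈ L, ∀ v ∈ L, w u v = 0) :
    Gains w s a μ (insert p L) (∑ v ∈ L, (w v p + w p v)) := by
  have ha : ∀ v ∈ insert p L, 0 ≤ a v := fun v hv =>
    (mul_nonneg h.κ_pos.le (abs_nonneg _)).trans (h.mul_abs_le v hv)
  have haL : 0 ≤ ∑ v ∈ L, a v := sum_nonneg fun v hv => ha v (mem_insert_of_mem hv)
  rcases le_total (∑ v ∈ L, a v) (κ ^ 2 * μ / 2) with hlight | hheavy
  · refine gains_star_of_light hw h.μ_pos hp hL (h.sq_div_le p (mem_insert_self p L)) ?_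
    have habs : κ * |∑ v ∈ L, s v| ≤ ∑ v ∈ L, a v := by
      calc κ * |∑ v ∈ L, s v| ≤ κ * ∑ v ∈ L, |s v| :=
            mul_le_mul_of_nonneg_left (abs_sum_le_sum_abs _ _) h.κ_pos.le
        _ ≤ ∑ v ∈ L, a v := by
            rw [mul_sum]
            exact sum_le_sum fun v hv => h.mul_abs_le v (mem_insert_of_mem hv)
    have hsq : κ ^ 2 * (∑ v ∈ L, s v) ^ 2 ≤ κ ^ 2 * (μ / 2 * ∑ v ∈ L, a v) := by
      calc κ ^ 2 * (∑ v ∈ L, s v) ^ 2 = (κ * |∑ v ∈ L, s v|) ^ 2 := by rw [mul_pow, sq_abs]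
        _ ≤ (∑ v ∈ L, a v) ^ 2 :=
            pow_le_pow_left₀ (mul_nonneg h.κ_pos.le (abs_nonneg _)) habs 2
        _ ≤ κ ^ 2 * (μ / 2 * ∑ v ∈ L, a v) := by
            linarith [mul_le_mul_of_nonneg_right hlight haL]
    rw [div_le_iff₀ h.μ_pos]
    linarith [le_of_mul_le_mul_left hsq (pow_pos h.κ_pos 2)]
  · refine (gains_half_sum hw h.sq_div_le).mono ?_
    have hdeg := h.degree_le p (mem_insert_self p L)
    rw [sum_insert hp, hw] at hdeg
    rw [sum_insert hp]
    linarith [ha p (mem_insert_self p L)]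

/-- The vertices of `T` outside `R` have parents in `T`, to which they are joined by weight at
least one, and the levels increase from parent to child: a rooted forest on `T` whose roots all lie
in `R`. -/
structure IsRootedForest {V : Type*} (w : V → V → ℝ) (parent : V → V) (level : V → ℕ)
    (R T : Finset V) : Prop where
  parent_mem : ∀ v ∈ T, v ∉ R → parent v ∈ T
  one_le_weight : ∀ v ∈ T, v ∉ R → 1 ≤ w v (parent v) + w (parent v) v
  level_eq : ∀ v ∈ T, v ∉ R → level v = level (parent v) + 1

namespace IsRootedForest

variable {parent : V → V} {level : V → ℕ} {R : Finset V}

theorem sdiff [DecidableEq V] (hF : IsRootedForest w parent level R T) {P : Finset V}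
    (hP : ∀ v ∈ T, v ∉ R → parent v ∈ P → v ∈ P) :
    IsRootedForest w parent level R (T \ P) where
  parent_mem v hv hvR := mem_sdiff.2 ⟨hF.parent_mem v (mem_sdiff.1 hv).1 hvR,
    fun h => (mem_sdiff.1 hv).2 (hP v (mem_sdiff.1 hv).1 hvR h)⟩
  one_le_weight v hv := hF.one_le_weight v (mem_sdiff.1 hv).1
  level_eq v hv := hF.level_eq v (mem_sdiff.1 hv).1

theorem exists_childless_siblings (hF : IsRootedForest w parent level R T) (hTR : ¬ T ⊆ R) :
    ∃ u ∈ T, u ∉ R ∧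
      ∀ v ∈ T, v ∉ R → parent v ∈ T → parent v ∉ R → parent (parent v) ≠ parent u := by
  classical
  obtain ⟨u, hu, hmax⟩ := exists_max_image (T \ R) level (sdiff_nonempty.2 hTR)
  rw [mem_sdiff] at hu
  refine ⟨u, hu.1, hu.2, fun v hv hvR hp hpR heq => ?_⟩
  have hle := hmax v (mem_sdiff.2 ⟨hv, hvR⟩)
  rw [hF.level_eq v hv hvR, hF.level_eq _ hp hpR, heq, hF.level_eq u hu.1 hu.2] at hle
  omega

/-- Among the deepest siblings, either two are adjacent, and these two gain their weight, or they
form an induced star with their parent, which gains the weight of the star. -/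
theorem exists_gains (hF : IsRootedForest w parent level R T)
    (hw : ∀ v, w v v = 0) (hw1 : ∀ u v, w u v = 0 ∨ 1 ≤ w u v) (h : IsAllowance w s a κ μ T)
    (hTR : ¬ T ⊆ R) :
    ∃ P ⊆ T, P.Nonempty ∧ (∀ v ∈ T, v ∉ R → parent v ∈ P → v ∈ P) ∧
      Gains w s a μ P ((#P : ℝ) / 2) := by
  classical
  have hw0 : ∀ u v, 0 ≤ w u v := fun u v => (hw1 u v).elim ge_of_eq zero_le_one.trans
  obtain ⟨u, hu, huR, hchildless⟩ := hF.exists_childless_siblings hTR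
  set L := {v ∈ T \ R | parent v = parent u}
  have memL : ∀ {v}, v ∈ L ↔ (v ∈ T ∧ v ∉ R) ∧ parent v = parent u := by simp [L]
  have hLT : L ⊆ T := fun v hv => (memL.1 hv).1.1
  have hleaf : ∀ v ∈ T, v ∉ R → parent v ∉ L := fun v hv hvR hp =>
    hchildless v hv hvR (memL.1 hp).1.1 (memL.1 hp).1.2 (memL.1 hp).2
  by_cases hind : ∀ x ∈ L, ∀ y ∈ L, w x y = 0
  · have hpL : parent u ∉ L := hleaf u hu huR
    have hPT : insert (parent u) L ⊆ T := insert_subset (hF.parent_mem u hu huR) hLT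
    refine ⟨_, hPT, insert_nonempty _ _, fun v hv hvR hp => ?_,
      (gains_star hw (h.mono hw0 hPT) hpL hind).mono ?_⟩
    · exact mem_insert_of_mem <| memL.2
        ⟨⟨hv, hvR⟩, (mem_insert.1 hp).resolve_right (hleaf v hv hvR)⟩
    · have hweight : (#L : ℝ) ≤ ∑ v ∈ L, (w v (parent u) + w (parent u) v) := by
        simpa using card_nsmul_le_sum L _ (1 : ℝ) fun v hv =>
          (memL.1 hv).2 ▸ hF.one_le_weight v (hLT hv) (memL.1 hv).1.2
      have hL1 : (1 : ℝ) ≤ #L := by exact_mod_cast card_pos.2 ⟨u, memL.2 ⟨⟨hu, huR⟩, rfl⟩⟩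
      rw [card_insert_of_notMem hpL]
      push_cast
      linarith
  · push Not at hind
    obtain ⟨x, hx, y, hy, hxy⟩ := hind
    have hne : x ≠ y := fun h => hxy (h ▸ hw x)
    have hPL : {x, y} ⊆ L := insert_subset hx (singleton_subset_iff.2 hy)
    refine ⟨{x, y}, hPL.trans hLT, insert_nonempty _ _,
      fun v hv hvR hp => absurd (hPL hp) (hleaf v hv hvR),
      (gains_pair hw h.μ_pos hne fun z hz => h.sq_div_le z (hLT (hPL hz))).mono ?_⟩
    rw [card_pair hne]
    push_cast
    linarith [(hw1 x y).resolve_left hxy, hw0 y x]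

theorem gains (hF : IsRootedForest w parent level R T) (hw : ∀ v, w v v = 0)
    (hw1 : ∀ u v, w u v = 0 ∨ 1 ≤ w u v) (h : IsAllowance w s a κ μ T) :
    Gains w s a μ T (((#T : ℝ) - #R) / 2) := by
  classical
  have hw0 : ∀ u v, 0 ≤ w u v := fun u v => (hw1 u v).elim ge_of_eq zero_le_one.trans
  induction T using Finset.strongInduction with
  | H T ih =>
  by_cases hTR : T ⊆ R
  · have hcard : (#T : ℝ) ≤ #R := by exact_mod_cast card_le_card hTR
    exact (gains_zero hw h.μ_pos h.sq_div_le).mono (by linarith)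
  · obtain ⟨P, hPT, hPne, hP, hgain⟩ := hF.exists_gains hw hw1 h hTR
    refine (Gains.of_sdiff hPT (ih _ (sdiff_ssubset hPT hPne) (hF.sdiff hP)
      (h.mono hw0 sdiff_subset)) hgain).mono ?_
    rw [cast_card_sdiff hPT]
    linarith

end IsRootedForest

theorem gains_of_card_le_two (hw : ∀ v, w v v = 0) (hμ : 0 < μ) (hS : #S ≤ 2)
    (hs : ∀ v ∈ S, s v ^ 2 / μ ≤ a v / 2) :
    Gains w s a μ S (∑ u ∈ S, ∑ v ∈ S, w u v) := by
  classical
  interval_cases h : #S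
  · rw [card_eq_zero] at h
    simpa [h] using gains_empty
  · obtain ⟨v, rfl⟩ := card_eq_one.1 h
    simpa [hw] using gains_zero hw hμ hs
  · obtain ⟨u, v, huv, rfl⟩ := card_eq_two.1 h
    simpa [sum_pair huv, hw] using gains_pair hw hμ huv hs

/-- Embed `S` into `ZMod q` and pair up the vertices with sum `c`, for the best choice of `c`: the
`q` possible choices cover every ordered pair exactly once. -/
theorem exists_pairing_le_sum (hw : ∀ u v, 0 ≤ w u v) {q : ℕ} [NeZero q] (hS : #S ≤ q) :
    ∃ f : V → Sym2 (ZMod q), (∀ r, #{v ∈ S | f v = f r} ≤ 2) ∧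
      (∑ u ∈ S, ∑ v ∈ S, w u v) / q ≤ ∑ u ∈ S, ∑ v ∈ S with f v = f u, w u v := by
  obtain ⟨φ, -, hφ⟩ := S.finite_toSet.exists_injOn_of_encard_le
    (t := (Set.univ : Set (ZMod q))) (by simpa using hS)
  obtain ⟨c, -, hc⟩ : ∃ c ∈ (univ : Finset (ZMod q)), (∑ u ∈ S, ∑ v ∈ S, w u v) / q ≤
      ∑ u ∈ S, ∑ v ∈ S, if φ u + φ v = c then w u v else 0 := by
    refine exists_le_of_sum_le univ_nonempty (le_of_eq ?_)
    have hcover : ∀ u ∈ S, ∑ c : ZMod q, ∑ v ∈ S, (if φ u + φ v = c then w u v else 0)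
        = ∑ v ∈ S, w u v := fun u _ => by rw [sum_comm]; simp
    rw [sum_const, card_univ, ZMod.card, nsmul_eq_mul, mul_div_cancel₀ _ (NeZero.ne _),
      sum_comm (s := univ), sum_congr rfl hcover]
  have hf : ∀ u v, s(φ v, c - φ v) = s(φ u, c - φ u) ↔ φ v = φ u ∨ φ u + φ v = c := fun u v => by
    rw [Sym2.eq_iff]
    grind
  refine ⟨fun v => s(φ v, c - φ v), fun r => ?_, hc.trans ?_⟩
  · refine (card_le_card_of_injOn φ (t := {φ r, c - φ r}) (fun v hv => ?_)
      (hφ.mono fun v hv => (mem_filter.1 hv).1)).trans card_le_two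
    have := (hf r v).1 (mem_filter.1 hv).2
    simpa [eq_sub_iff_add_eq'] using this
  · refine sum_le_sum fun u _ => ?_
    rw [sum_filter]
    refine sum_le_sum fun v _ => ?_
    split_ifs with h h'
    exacts [le_rfl, absurd ((hf u v).2 (Or.inr h)) h', hw u v, le_rfl]

theorem gains_of_card_le (hw : ∀ v, w v v = 0) (hw0 : ∀ u v, 0 ≤ w u v) (hμ : 0 < μ) {q : ℕ}
    [NeZero q] (hS : #S ≤ q) (hs : ∀ v ∈ S, s v ^ 2 / μ ≤ a v / 2) :
    Gains w s a μ S ((∑ u ∈ S, ∑ v ∈ S, w u v) / q) := by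
  classical
  obtain ⟨f, hcard, hf⟩ := exists_pairing_le_sum hw0 hS
  refine (gains_of_fibers f (fun u => ∑ v ∈ S with f v = f u, w u v) fun r _ => ?_).mono hf
  refine (gains_of_card_le_two hw hμ (hcard r) fun v hv => hs v (mem_filter.1 hv).1).mono
    (le_of_eq (sum_congr rfl fun u hu => ?_))
  rw [(mem_filter.1 hu).2]

/-- The graph on `S` in which two vertices are adjacent if one of the two ordered pairs which they
form has nonzero weight; the vertices outside `S` are isolated. -/
def supportGraph {V : Type*} (w : V → V → ℝ) (S : Finset V) : SimpleGraph V :=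
  SimpleGraph.fromRel fun u v => (u ∈ S ∧ v ∈ S) ∧ w u v ≠ 0

theorem supportGraph_mem_of_reachable {r v : V} (hr : r ∈ S)
    (hv : (supportGraph w S).Reachable v r) : v ∈ S := by
  obtain ⟨_ | ⟨hadj, _⟩⟩ := hv
  · exact hr
  · rcases hadj.2 with h | h
    exacts [h.1.1, h.1.2]

theorem one_le_of_supportGraph_adj (hw1 : ∀ u v, w u v = 0 ∨ 1 ≤ w u v) {u v : V}
    (h : (supportGraph w S).Adj u v) : 1 ≤ w u v + w v u := by
  have hw0 : ∀ u v, 0 ≤ w u v := fun u v => (hw1 u v).elim ge_of_eq zero_le_one.trans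
  rcases h.2 with h | h
  · linarith [(hw1 u v).resolve_left h.2, hw0 v u]
  · linarith [(hw1 v u).resolve_left h.2, hw0 u v]

theorem exists_adj_reachable_dist_eq {G : SimpleGraph V} {r v : V} (hr : G.Reachable v r)
    (hne : v ≠ r) : ∃ p, G.Adj v p ∧ G.Reachable p r ∧ G.dist v r = G.dist p r + 1 := by
  obtain ⟨walk, hlength⟩ := hr.exists_walk_length_eq_dist
  cases walk with
  | nil => exact absurd rfl hne
  | @cons _ p _ hadj tail =>
    refine ⟨p, hadj, tail.reachable, ?_⟩
    obtain ⟨shortest, hshortest⟩ := tail.reachable.exists_walk_length_eq_dist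
    have htail := SimpleGraph.dist_le tail
    have hcons := SimpleGraph.dist_le (shortest.cons hadj)
    rw [SimpleGraph.Walk.length_cons] at hlength hcons
    omega

theorem exists_isRootedForest_of_reachable (hw1 : ∀ u v, w u v = 0 ∨ 1 ≤ w u v) {r : V}
    (hT : ∀ v, v ∈ T ↔ (supportGraph w S).Reachable v r) :
    ∃ parent, IsRootedForest w parent (fun v => (supportGraph w S).dist v r) {r} T := by
  have hparent : ∀ v, ∃ p, v ∈ T → v ∉ ({r} : Finset V) → p ∈ T ∧ (supportGraph w S).Adj v p ∧
      (supportGraph w S).dist v r = (supportGraph w S).dist p r + 1 := fun v => by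
    by_cases hv : v ∈ T ∧ v ∉ ({r} : Finset V)
    · obtain ⟨p, hadj, hreach, hdist⟩ :=
        exists_adj_reachable_dist_eq ((hT v).1 hv.1) (notMem_singleton.1 hv.2)
      exact ⟨p, fun _ _ => ⟨(hT p).2 hreach, hadj, hdist⟩⟩
    · exact ⟨v, fun h h' => absurd ⟨h, h'⟩ hv⟩
  choose parent hparent using hparent
  exact ⟨parent, fun v hv hvr => (hparent v hv hvr).1,
    fun v hv hvr => one_le_of_supportGraph_adj hw1 (hparent v hv hvr).2.1,
    fun v hv hvr => (hparent v hv hvr).2.2⟩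

theorem gains_of_reachable (hw : ∀ v, w v v = 0) (hw1 : ∀ u v, w u v = 0 ∨ 1 ≤ w u v)
    (h : IsAllowance w s a κ μ T) {r : V}
    (hT : ∀ v, v ∈ T ↔ (supportGraph w S).Reachable v r) (k : ℕ) :
    Gains w s a μ T (∑ v ∈ T, min (k : ℝ) (∑ u ∈ T, w v u) / (2 * k + 1)) := by
  have hw0 : ∀ u v, 0 ≤ w u v := fun u v => (hw1 u v).elim ge_of_eq zero_le_one.trans
  rw [← sum_div]
  rcases le_total #T (2 * k + 1) with hcard | hcard
  · refine (gains_of_card_le hw hw0 h.μ_pos hcard h.sq_div_le).mono ?_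
    push_cast
    gcongr
    exact min_le_right _ _
  · obtain ⟨parent, hF⟩ := exists_isRootedForest_of_reachable hw1 hT
    refine (hF.gains hw hw1 h).mono ?_
    have hmin : ∑ v ∈ T, min (k : ℝ) (∑ u ∈ T, w v u) ≤ #T * k := by
      simpa using sum_le_sum fun v (_ : v ∈ T) => min_le_left (k : ℝ) (∑ u ∈ T, w v u)
    have hcard' : (2 * k + 1 : ℝ) ≤ #T := by exact_mod_cast hcard
    rw [card_singleton, div_le_iff₀ (by positivity)]
    push_cast
    linarith

/-- Work component by component: a component with at most `2 * k + 1` vertices gains a fraction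
`1 / (2 * k + 1)` of its weight, and a larger one gains half a unit per edge of a spanning tree. -/
theorem gains_sum_min (hw : ∀ v, w v v = 0) (hw1 : ∀ u v, w u v = 0 ∨ 1 ≤ w u v)
    (h : IsAllowance w s a κ μ S) (k : ℕ) :
    Gains w s a μ S (∑ v ∈ S, min (k : ℝ) (∑ u ∈ S, w v u) / (2 * k + 1)) := by
  classical
  have hw0 : ∀ u v, 0 ≤ w u v := fun u v => (hw1 u v).elim ge_of_eq zero_le_one.trans
  refine gains_of_fibers (supportGraph w S).connectedComponentMk _ fun r hr => ?_
  set T := {v ∈ S | (supportGraph w S).connectedComponentMk v =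
    (supportGraph w S).connectedComponentMk r}
  have hTS : T ⊆ S := filter_subset _ S
  have hT : ∀ v, v ∈ T ↔ (supportGraph w S).Reachable v r := fun v => by
    rw [mem_filter, SimpleGraph.ConnectedComponent.eq]
    exact and_iff_right_of_imp (supportGraph_mem_of_reachable hr)
  refine (gains_of_reachable hw hw1 (h.mono hw0 hTS) hT k).mono
    (le_of_eq (sum_congr rfl fun v hv => ?_))
  rw [sum_subset hTS fun u hu huT => ?_]
  by_contra hne
  have hadj : (supportGraph w S).Adj v u :=
    ⟨fun h => hne (h ▸ hw v), Or.inl ⟨⟨hTS hv, hu⟩, hne⟩⟩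
  exact huT ((hT u).2 (hadj.symm.reachable.trans ((hT v).1 hv)))

theorem Gains.exists_le_sub_abs_signSum (hμ : 0 < μ) (h : Gains w s a μ S t) :
    ∃ σ, IsSigning σ ∧ t - ∑ v ∈ S, a v - μ / 4 ≤ signCut w σ S - |signSum s σ S| := by
  obtain ⟨σ, hσ, hle⟩ := h
  have hlinear : |signSum s σ S| - μ / 4 ≤ signSum s σ S ^ 2 / μ := by
    rw [le_div_iff₀ hμ, ← sq_abs]
    linarith [sq_nonneg (|signSum s σ S| - μ / 2)]
  exact ⟨σ, hσ, by linarith⟩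

end Gains

section Digraph

/-- The arcs of `A` as `0`-`1` weights on the ordered pairs of vertices. -/
def arcWeight {V : Type} (A : V → V → Prop) [DecidableRel A] (u v : V) : ℝ :=
  if A u v then 1 else 0

/-- The outdegree minus the indegree of `v`, whose absolute value is `sVal A v`. -/
def surplus {V : Type} [Fintype V] (A : V → V → Prop) [DecidableRel A] (v : V) : ℝ :=
  (outDeg A v : ℝ) - inDeg A v

variable {V : Type} {A : V → V → Prop} [DecidableRel A]

theorem arcWeight_self (hA : ∀ v, ¬ A v v) (v : V) : arcWeight A v v = 0 :=
  if_neg (hA v)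

theorem arcWeight_eq_zero_or_one (u v : V) : arcWeight A u v = 0 ∨ arcWeight A u v = 1 :=
  (ite_eq_or_eq ..).symm

theorem arcWeight_nonneg (u v : V) : 0 ≤ arcWeight A u v := by
  rcases arcWeight_eq_zero_or_one (A := A) u v with h | h <;> simp [h]

theorem arcWeight_le_one (u v : V) : arcWeight A u v ≤ 1 := by
  rcases arcWeight_eq_zero_or_one (A := A) u v with h | h <;> simp [h]

variable [Fintype V]

theorem cast_outDeg (v : V) : (outDeg A v : ℝ) = ∑ u, arcWeight A v u := by
  simp [outDeg, arcWeight]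

theorem cast_inDeg (v : V) : (inDeg A v : ℝ) = ∑ u, arcWeight A u v := by
  simp [inDeg, arcWeight]

theorem cast_sVal (v : V) : (sVal A v : ℝ) = |surplus A v| := by
  simp [sVal, surplus, abs_eq_max_neg]

theorem abs_surplus_le_deg (v : V) : |surplus A v| ≤ deg A v := by
  rw [surplus, deg, Nat.cast_add]
  exact (abs_sub _ _).trans_eq (by simp)

theorem isAllowance_mul_deg {Y : Finset V} {e n : ℝ} (he : 0 < e) (he1 : e ≤ 1) (hn : 0 < n)
    (hdeg : ∀ v ∈ Y, (deg A v : ℝ) ≤ e ^ 3 / 4 * n) :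
    IsAllowance (arcWeight A) (surplus A) (fun v => e * deg A v) e (e * n) Y where
  κ_pos := he
  μ_pos := mul_pos he hn
  sq_div_le v hv := by
    rw [div_le_iff₀ (mul_pos he hn)]
    calc surplus A v ^ 2 ≤ (deg A v : ℝ) ^ 2 := sq_le_sq' (neg_le_of_abs_le (abs_surplus_le_deg v))
          (le_of_abs_le (abs_surplus_le_deg v))
      _ = deg A v * deg A v := sq _
      _ ≤ deg A v * (e ^ 3 / 4 * n) := by gcongr; exact hdeg v hv
      _ ≤ deg A v * (e ^ 2 / 2 * n) := by
          gcongr ?_ * (?_ * ?_)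
          linarith [pow_le_pow_of_le_one he.le he1 (show 2 ≤ 3 by norm_num), pow_pos he 2]
      _ = e * deg A v / 2 * (e * n) := by ring
  mul_abs_le v _ := mul_le_mul_of_nonneg_left (abs_surplus_le_deg v) he.le
  degree_le v hv := by
    calc ∑ u ∈ Y, (arcWeight A u v + arcWeight A v u)
        ≤ ∑ u, (arcWeight A u v + arcWeight A v u) := sum_le_univ_sum_of_nonneg fun u =>
          add_nonneg (arcWeight_nonneg u v) (arcWeight_nonneg v u)
      _ = deg A v := by
          rw [sum_add_distrib, ← cast_outDeg, ← cast_inDeg, deg, Nat.cast_add, add_comm]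
      _ ≤ e ^ 3 / 4 * n := hdeg v hv
      _ = e ^ 2 * (e * n) / 4 := by ring

variable [DecidableEq V]

theorem cast_dArcs (S T : Finset V) :
    (dArcs A S T : ℝ) = ∑ u ∈ S, ∑ v ∈ T, arcWeight A u v := by
  rw [dArcs, ← sum_product', card_filter]
  push_cast
  rfl

theorem sum_outDeg : ∑ v, (outDeg A v : ℝ) = dArcs A univ univ := by
  simp only [cast_dArcs, cast_outDeg]

theorem sum_deg : ∑ v, (deg A v : ℝ) = 2 * dArcs A univ univ := by
  simp only [deg, Nat.cast_add, sum_add_distrib, cast_outDeg, cast_inDeg, cast_dArcs]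
  rw [sum_comm (f := fun v u => arcWeight A u v), two_mul]

theorem card_le_dArcs_univ (h : ∀ v, 1 ≤ outDeg A v) :
    (Fintype.card V : ℝ) ≤ dArcs A univ univ := by
  rw [← sum_outDeg]
  simpa using sum_le_sum fun v (_ : v ∈ univ) => Nat.one_le_cast (α := ℝ).2 (h v)

theorem four_mul_dArcs_filter {σ : V → ℝ} (hσ : IsSigning σ) :
    4 * (dArcs A {v | σ v = 1} {v | σ v = -1} : ℝ) =
      dArcs A univ univ + signCut (arcWeight A) σ univ + signSum (surplus A) σ univ := by
  have hpos : ∀ v, (if σ v = 1 then (1 : ℝ) else 0) = (1 + σ v) / 2 := fun v => by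
    rcases hσ v with h | h <;> norm_num [h]
  have hneg : ∀ v, (if σ v = -1 then (1 : ℝ) else 0) = (1 - σ v) / 2 := fun v => by
    rcases hσ v with h | h <;> norm_num [h]
  have hsum : signSum (surplus A) σ univ = ∑ u, ∑ v, arcWeight A u v * (σ u - σ v) := by
    simp only [signSum, surplus, cast_outDeg, cast_inDeg, sub_mul, mul_sub, sum_sub_distrib,
      sum_mul]
    rw [sum_comm (f := fun v u => arcWeight A u v * σ v)]
  have hcut : (dArcs A {v | σ v = 1} {v | σ v = -1} : ℝ)
      = ∑ u, ∑ v, arcWeight A u v * ((1 + σ u) / 2) * ((1 - σ v) / 2) := by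
    simp only [cast_dArcs, sum_filter, ← hpos, ← hneg, mul_ite, mul_one, mul_zero]
    exact sum_congr rfl fun u _ => by split_ifs <;> simp
  rw [hcut, hsum, cast_dArcs, signCut]
  simp only [mul_sum, ← sum_neg_distrib, ← sum_add_distrib]
  exact sum_congr rfl fun u _ => sum_congr rfl fun v _ => by ring

theorem IsSigning.exists_bipartition {σ : V → ℝ} (hσ : IsSigning σ) :
    ∃ V₁ V₂ : Finset V, V₁ ∪ V₂ = univ ∧ Disjoint V₁ V₂ ∧
      (dArcs A univ univ + (signCut (arcWeight A) σ univ - |signSum (surplus A) σ univ|)) / 4 ≤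
        min (dArcs A V₁ V₂ : ℝ) (dArcs A V₂ V₁ : ℝ) := by
  have hforward := four_mul_dArcs_filter (A := A) hσ
  have hbackward := four_mul_dArcs_filter (A := A) hσ.neg
  simp only [Pi.neg_apply, neg_eq_iff_eq_neg, neg_neg, signCut_neg, signSum_neg] at hbackward
  refine ⟨({v | σ v = 1} : Finset V), ({v | σ v = -1} : Finset V), ?_, ?_, le_min ?_ ?_⟩
  · rw [← filter_or, filter_true_of_mem fun v _ => hσ v]
  · exact disjoint_filter.2 fun v _ h h' => by norm_num [h] at h'
  · linarith [neg_abs_le (signSum (surplus A) σ univ)]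
  · linarith [le_abs_self (signSum (surplus A) σ univ)]

variable {X Y S : Finset V}

theorem arcWeight_eq_zero_of_dArcs (hX : dArcs A X X = 0) {u v : V} (hu : u ∈ X) (hv : v ∈ X) :
    arcWeight A u v = 0 := by
  rw [dArcs, card_eq_zero, filter_eq_empty_iff] at hX
  exact if_neg (hX (mem_product.2 ⟨hu, hv⟩ : (u, v) ∈ X ×ˢ X))

theorem cast_outDeg_of_mem (hXY : X ∪ Y = univ) (hX : dArcs A X X = 0) {v : V} (hv : v ∈ X) :
    (outDeg A v : ℝ) = ∑ u ∈ Y, arcWeight A v u := by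
  rw [cast_outDeg]
  exact (sum_subset (subset_univ Y) fun u hu huY => arcWeight_eq_zero_of_dArcs hX hv
    ((mem_union.1 (hXY ▸ hu)).resolve_right huY)).symm

theorem cast_inDeg_of_mem (hXY : X ∪ Y = univ) (hX : dArcs A X X = 0) {v : V} (hv : v ∈ X) :
    (inDeg A v : ℝ) = ∑ u ∈ Y, arcWeight A u v := by
  rw [cast_inDeg]
  exact (sum_subset (subset_univ Y) fun u hu huY => arcWeight_eq_zero_of_dArcs hX
    ((mem_union.1 (hXY ▸ hu)).resolve_right huY) hv).symm

theorem sum_outDeg_of_subset (hXY : X ∪ Y = univ) (hX : dArcs A X X = 0) (hS : S ⊆ X) :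
    ∑ v ∈ S, (outDeg A v : ℝ) = dArcs A S Y := by
  rw [cast_dArcs]
  exact sum_congr rfl fun v hv => cast_outDeg_of_mem hXY hX (hS hv)

theorem sum_inDeg_of_subset (hXY : X ∪ Y = univ) (hX : dArcs A X X = 0) (hS : S ⊆ X) :
    ∑ v ∈ S, (inDeg A v : ℝ) = dArcs A Y S := by
  rw [cast_dArcs, sum_comm]
  exact sum_congr rfl fun v hv => cast_inDeg_of_mem hXY hX (hS hv)

theorem abs_surplus_le_card (hXY : X ∪ Y = univ) (hX : dArcs A X X = 0) {x : V} (hx : x ∈ X) :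
    |surplus A x| ≤ #Y := by
  refine abs_sub_le_of_nonneg_of_le (Nat.cast_nonneg _) ?_ (Nat.cast_nonneg _) ?_
  · rw [cast_outDeg_of_mem hXY hX hx]
    simpa using sum_le_sum fun v (_ : v ∈ Y) => arcWeight_le_one (A := A) x v
  · rw [cast_inDeg_of_mem hXY hX hx]
    simpa using sum_le_sum fun v (_ : v ∈ Y) => arcWeight_le_one (A := A) v x

theorem dArcs_univ_eq_add_sum_deg (hXY : X ∪ Y = univ) (hdis : Disjoint X Y)
    (hX : dArcs A X X = 0) :
    (dArcs A univ univ : ℝ) = dArcs A Y Y + ∑ v ∈ X, (deg A v : ℝ) := by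
  have hY : ∑ v ∈ Y, (outDeg A v : ℝ) = dArcs A Y X + dArcs A Y Y := by
    simp only [cast_outDeg, cast_dArcs, ← hXY, sum_union hdis, sum_add_distrib]
  simp only [deg, Nat.cast_add, sum_add_distrib]
  rw [← sum_outDeg, ← hXY, sum_union hdis, hY, sum_inDeg_of_subset hXY hX subset_rfl]
  ring

theorem cast_gap (hXY : X ∪ Y = univ) (hX : dArcs A X X = 0) {X₁ : Finset V} (hX₁ : X₁ ⊆ X) :
    (gap A X₁ (X \ X₁) Y : ℝ) = signSum (surplus A) (X₁.piecewise 1 (-1)) X := by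
  have hsurplus : ∀ S ⊆ X, ∑ v ∈ S, surplus A v = dArcs A S Y - dArcs A Y S := fun S hS => by
    rw [← sum_outDeg_of_subset hXY hX hS, ← sum_inDeg_of_subset hXY hX hS, ← sum_sub_distrib]
    rfl
  have hsplit := signSum_piecewise (s := surplus A) (σ := 1) (τ := -1)
    (disjoint_sdiff (s := X₁) (t := X))
  rw [union_sdiff_of_subset hX₁, signSum_neg] at hsplit
  simp only [signSum, Pi.one_apply, mul_one] at hsplit
  rw [signSum, hsplit, hsurplus _ hX₁, hsurplus _ sdiff_subset, gap]
  push_cast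
  ring

theorem isLeast_abs_signSum_surplus (hXY : X ∪ Y = univ) (hX : dArcs A X X = 0) {θ : ℤ}
    (hθ : IsLeast {t : ℤ | ∃ X₁ ⊆ X, t = |gap A X₁ (X \ X₁) Y|} θ) :
    IsLeast {t : ℝ | ∃ σ, IsSigning σ ∧ t = |signSum (surplus A) σ X|} θ := by
  obtain ⟨⟨X₁, hX₁, hθX₁⟩, hle⟩ := hθ
  refine ⟨⟨X₁.piecewise 1 (-1), isSigning_one.piecewise isSigning_one.neg, ?_⟩, ?_⟩
  · rw [← cast_gap hXY hX hX₁, hθX₁, Int.cast_abs]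
  · rintro _ ⟨σ, hσ, rfl⟩
    classical
    have hfilter : {v ∈ X | σ v = 1} ⊆ X := filter_subset _ X
    have hσX : signSum (surplus A) σ X
        = signSum (surplus A) ({v ∈ X | σ v = 1}.piecewise 1 (-1)) X :=
      sum_congr rfl fun v hv => by
        rcases hσ v with h | h
        · simp [hv, h]
        · norm_num [hv, h]
    rw [hσX, ← cast_gap hXY hX hfilter]
    exact_mod_cast hle ⟨_, hfilter, rfl⟩

theorem two_mul_card_sub_le_sum_min (hXY : X ∪ Y = univ) (hdis : Disjoint X Y) {k : ℕ}
    (hout : ∀ y ∈ Y, k + 1 ≤ outDeg A y) {x : V} (hx : x ∈ X) :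
    2 * k * (#Y : ℝ) - dArcs A Y Y - 2 * dArcs A Y (X.erase x) ≤
      ∑ v ∈ Y, min (k : ℝ) (∑ u ∈ Y, arcWeight A v u) := by
  have hpoint : ∀ v ∈ Y, 2 * (k : ℝ) - ∑ u ∈ Y, arcWeight A v u
      - 2 * ∑ u ∈ X.erase x, arcWeight A v u ≤ min (k : ℝ) (∑ u ∈ Y, arcWeight A v u) :=
    fun v hv => by
      have hdeg : (k + 1 : ℝ) ≤ outDeg A v := by exact_mod_cast hout v hv
      rw [cast_outDeg, ← hXY, sum_union hdis, ← add_sum_erase _ _ hx] at hdeg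
      have herase : 0 ≤ ∑ u ∈ X.erase x, arcWeight A v u := sum_nonneg fun u _ =>
        arcWeight_nonneg v u
      refine le_min ?_ ?_ <;> linarith [arcWeight_le_one (A := A) v x]
  refine le_trans (le_of_eq ?_) (sum_le_sum hpoint)
  simp only [sum_sub_distrib, ← mul_sum, cast_dArcs, sum_const, nsmul_eq_mul]
  ring

/-- Of the `2 * k + 1` copies of `|surplus A x|`, the minima over `Y` pay for `2 * k`, because
`|surplus A x| ≤ #Y`, and the arcs at `x` pay for the last one. -/
theorem two_mul_add_one_mul_le_sum_min_add (hXY : X ∪ Y = univ) (hdis : Disjoint X Y)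
    (hX : dArcs A X X = 0) {k : ℕ} (hout : ∀ y ∈ Y, k + 1 ≤ outDeg A y) {x : V} (hx : x ∈ X)
    {θ : ℝ} (hθ : θ ≤ |surplus A x| - ∑ y ∈ X.erase x, |surplus A y|) :
    (2 * k + 1) * θ ≤
      ∑ v ∈ Y, min (k : ℝ) (∑ u ∈ Y, arcWeight A v u) + dArcs A univ univ := by
  have hmin := two_mul_card_sub_le_sum_min hXY hdis hout hx
  have hm := dArcs_univ_eq_add_sum_deg hXY hdis hX
  have hcard := mul_le_mul_of_nonneg_left (abs_surplus_le_card hXY hX hx) (Nat.cast_nonneg k)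
  have hdegErase : ∑ v ∈ X.erase x, (deg A v : ℝ)
      = ∑ v ∈ X.erase x, surplus A v + 2 * dArcs A Y (X.erase x) := by
    rw [← sum_inDeg_of_subset hXY hX (erase_subset x X), mul_sum, ← sum_add_distrib]
    exact sum_congr rfl fun v _ => by rw [deg, surplus, Nat.cast_add]; ring
  have hneg := neg_le_of_abs_le (abs_sum_le_sum_abs (surplus A) (X.erase x))
  have hnonneg : 0 ≤ k * ∑ y ∈ X.erase x, |surplus A y| :=
    mul_nonneg (Nat.cast_nonneg k) (sum_nonneg fun y _ => abs_nonneg _)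
  have hscaled := mul_le_mul_of_nonneg_left hθ (Nat.cast_nonneg k)
  rw [← add_sum_erase _ _ hx, hdegErase] at hm
  linarith [abs_surplus_le_deg (A := A) x]

theorem exists_isSigning_univ_sub_abs (hA : ∀ v, ¬ A v v) (hXY : X ∪ Y = univ) (hdis : Disjoint X Y)
    (hX : dArcs A X X = 0) {e n : ℝ} (he : 0 < e) (he1 : e ≤ 1) (hn : 0 < n)
    (hdeg : ∀ v ∈ Y, (deg A v : ℝ) ≤ e ^ 3 / 4 * n)
    {σ : V → ℝ} (hσ : IsSigning σ) (k : ℕ) :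
    ∃ ρ, IsSigning ρ ∧ (∑ v ∈ Y, min (k : ℝ) (∑ u ∈ Y, arcWeight A v u)) / (2 * k + 1)
        - |signSum (surplus A) σ X| - e * (∑ v ∈ Y, (deg A v : ℝ) + n / 4) ≤
      signCut (arcWeight A) ρ univ - |signSum (surplus A) ρ univ| := by
  have hallow := isAllowance_mul_deg he he1 hn hdeg
  obtain ⟨τ, hτ, hgain⟩ := (gains_sum_min (arcWeight_self hA) (fun u v =>
    (arcWeight_eq_zero_or_one u v).imp_right ge_of_eq) hallow k).exists_le_sub_abs_signSum
    hallow.μ_pos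
  obtain ⟨ρ, hρ, hglue⟩ := exists_isSigning_union_sub_abs (w := arcWeight A) (s := surplus A) hdis
    hσ hτ
  rw [hXY, signCut_eq_zero fun u hu v hv => arcWeight_eq_zero_of_dArcs hX hu hv] at hglue
  rw [← sum_div, ← mul_sum] at hgain
  exact ⟨ρ, hρ, by linarith⟩

theorem le_abs_surplus_sub_of_card_eq_one {θ : ℤ}
    (hθ : IsLeast {t : ℝ | ∃ σ, IsSigning σ ∧ t = |signSum (surplus A) σ X|} θ)
    (hcard : #{x ∈ X | θ ≤ sVal A x} = 1) :
    ∃ x ∈ X, (θ : ℝ) ≤ |surplus A x| - ∑ y ∈ X.erase x, |surplus A y| := by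
  obtain ⟨x, hx⟩ := card_eq_one.1 hcard
  have hxX : x ∈ X := (mem_filter.1 (hx ▸ mem_singleton_self x)).1
  refine ⟨x, hxX, le_abs_sub_sum_abs_of_forall_isSigning hxX (fun σ hσ => hθ.2 ⟨σ, hσ, rfl⟩)
    fun y hy => ?_⟩
  rw [← cast_sVal, Int.cast_lt]
  by_contra! hle
  exact ne_of_mem_erase hy (mem_singleton.1 (hx ▸ mem_filter.2 ⟨mem_of_mem_erase hy, hle⟩))

end Digraph

theorem min_one_pow_three_div_four_lt {ε : ℝ} (hε : 0 < ε) : min ε 1 ^ 3 / 4 < ε := by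
  have hpow : min ε 1 ^ 3 ≤ min ε 1 :=
    pow_le_of_le_one (le_min hε.le zero_le_one) (min_le_right ε 1) three_ne_zero
  linarith [min_le_left ε 1]

theorem stmt15_general {V : Type} [Fintype V] [DecidableEq V] (A : V → V → Prop) [DecidableRel A]
    {d : ℕ} (hd : 1 ≤ d) {ε : ℝ} (hε : 0 < ε) (hA : ∀ v, ¬ A v v) (hout : ∀ x, d ≤ outDeg A x)
    {X Y : Finset V} (hXY : X ∪ Y = univ) (hdis : Disjoint X Y) (hX : dArcs A X X = 0)
    (hdeg : ∀ y ∈ Y, (deg A y : ℝ) ≤ min ε 1 ^ 3 / 4 * Fintype.card V) {θ : ℤ}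
    (hθ : IsLeast {t : ℤ | ∃ X₁ ⊆ X, t = |gap A X₁ (X \ X₁) Y|} θ)
    (hcard : #{x ∈ X | θ ≤ sVal A x} = 1) :
    ∃ V₁ V₂ : Finset V, V₁ ∪ V₂ = univ ∧ Disjoint V₁ V₂ ∧
      (((d : ℝ) - 1) / (2 * (2 * (d : ℝ) - 1)) - ε) * dArcs A univ univ ≤
        min (dArcs A V₁ V₂ : ℝ) (dArcs A V₂ V₁ : ℝ) := by
  obtain ⟨k, rfl⟩ := Nat.exists_eq_add_of_le' hd
  have he : 0 < min ε 1 := lt_min hε one_pos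
  have hθX := isLeast_abs_signSum_surplus hXY hX hθ
  obtain ⟨x, hx, hθx⟩ := le_abs_surplus_sub_of_card_eq_one hθX hcard
  have hn : (0 : ℝ) < Fintype.card V := by exact_mod_cast Fintype.card_pos_iff.2 ⟨x⟩
  obtain ⟨σ, hσ, hθσ⟩ := hθX.1
  obtain ⟨ρ, hρ, hgain⟩ :=
    exists_isSigning_univ_sub_abs hA hXY hdis hX he (min_le_right ε 1) hn hdeg hσ k
  rw [← hθσ] at hgain
  obtain ⟨V₁, V₂, hV, hVdis, hmin⟩ := hρ.exists_bipartition (A := A)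
  refine ⟨V₁, V₂, hV, hVdis, le_trans ?_ hmin⟩
  have hpay := two_mul_add_one_mul_le_sum_min_add hXY hdis hX (fun y _ => hout y) hx hθx
  set M := ∑ v ∈ Y, min (k : ℝ) (∑ u ∈ Y, arcWeight A v u)
  set m := (dArcs A univ univ : ℝ)
  have herror : min ε 1 * (∑ v ∈ Y, (deg A v : ℝ) + Fintype.card V / 4) ≤ ε * (4 * m) := by
    have hdegY : ∑ v ∈ Y, (deg A v : ℝ) ≤ 2 * m :=
      (sum_le_univ_sum_of_nonneg fun v => Nat.cast_nonneg _).trans_eq sum_deg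
    have hcardV : Fintype.card V ≤ m := card_le_dArcs_univ fun v => hd.trans (hout v)
    exact mul_le_mul (min_le_left ε 1) (by linarith) (by positivity) hε.le
  have hgap : θ - m / (2 * k + 1) ≤ M / (2 * k + 1) := by
    rw [sub_le_iff_le_add, ← add_div, le_div_iff₀ (by positivity), mul_comm]
    exact hpay
  have hmain : ((k : ℝ) / (2 * (2 * k + 1))) * m = (m - m / (2 * k + 1)) / 4 := by
    field_simp
    ring
  push_cast
  rw [show (k : ℝ) + 1 - 1 = k by ring, show 2 * ((k : ℝ) + 1) - 1 = 2 * k + 1 by ring, sub_mul,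
    hmain]
  linarith

/-- Proposition 4.3(2): a unique huge vertex. -/
theorem stmt15 (d : ℕ) (hd : 4 ≤ d) (C ε : ℝ) (hC : 0 < C) (hε : 0 < ε) :
    ∃ γ : ℝ, 0 < γ ∧ γ < ε ∧ ∃ n₀ : ℕ,
      ∀ (V : Type) [Fintype V] [DecidableEq V] (A : V → V → Prop) [DecidableRel A],
        (∀ v, ¬ A v v) →
        ∀ n m : ℕ, n = Fintype.card V → m = dArcs A Finset.univ Finset.univ →
        n₀ ≤ n → (m : ℝ) ≤ C * n →
        (∀ x, d ≤ outDeg A x) →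
        ∀ X Y : Finset V, X ∪ Y = Finset.univ → Disjoint X Y →
        (X.card : ℝ) ≤ γ * n → dArcs A X X = 0 →
        (∀ y ∈ Y, (deg A y : ℝ) ≤ γ * n) →
        ∀ θ : ℤ, IsLeast {t : ℤ | ∃ X₁ ⊆ X, t = |gap A X₁ (X \ X₁) Y|} θ →
        (X.filter fun x => θ ≤ sVal A x).card = 1 →
        ∃ V₁ V₂ : Finset V, V₁ ∪ V₂ = Finset.univ ∧ Disjoint V₁ V₂ ∧
          (((d : ℝ) - 1) / (2 * (2 * (d : ℝ) - 1)) - ε) * m ≤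
            min (dArcs A V₁ V₂ : ℝ) (dArcs A V₂ V₁ : ℝ) := by
  refine ⟨min ε 1 ^ 3 / 4, by positivity, min_one_pow_three_div_four_lt hε, 0, ?_⟩
  rintro V _ _ A _ hA _ _ rfl rfl - - hout X Y hXY hdis - hX hdeg θ hθ hcard
  exact stmt15_general A (by omega) hε hA hout hXY hdis hX hdeg hθ hcard
end

section
/- For every integer n ≥ 4 there exists a digraph D with n vertices, exactly n arcs, and minimum outdegree equal to 1, such that every bipartition V(D) = V₁ ∪ V₂ satisfies min{e(V₁,V₂), e(V₂,V₁)} ≤ 1. (Such a digraph is obtained from the star K_{1,n−1} by adding one edge between two leaves, orienting the resulting unique triangle as a directed cycle, and orienting all remaining edges toward the center of the star.) -/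
open Finset

/-!
In the digraph of a map `f : V → V`, with arcs `x → f x`, all outdegrees are `1`, and the arcs from
`S` to `T` correspond to the vertices of `S` that `f` sends into `T`. Let `f` rotate a triangle
`a → b → c → a` and send every other vertex to `a`. Only `a` and `b` are then not sent to `a`, so
only they can start an arc leaving the side of a bipartition that contains `a`. The arc `a → b`
leaves that side only if `b` lies on the other one, and an arc from `b` only if `b` lies on it, so
at most one arc leaves.
-/

section FunctionalDigraph

variable {V : Type} [Fintype V] [DecidableEq V] (f : V → V)

lemma outDeg_functional (x : V) : outDeg (fun u v => f u = v) x = 1 := by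
  simp [outDeg, filter_eq]

lemma dArcs_functional (S T : Finset V) :
    dArcs (fun u v => f u = v) S T = #{x ∈ S | f x ∈ T} := by
  symm
  refine card_bij (fun x _ => (x, f x)) ?_ ?_ ?_
  · simp
  · intro x _ y _ h
    exact congrArg Prod.fst h
  · rintro ⟨x, y⟩ hxy
    obtain ⟨⟨hxS, hyT⟩, rfl⟩ := by simpa only [mem_filter, mem_product] using hxy
    exact ⟨x, mem_filter.mpr ⟨hxS, hyT⟩, rfl⟩

end FunctionalDigraph

section StarTriangle

variable {V : Type} [DecidableEq V] {a b c : V}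

/-- The out-neighbour map of the star with centre `a` to which an edge between the leaves `b` and
`c` is added, the triangle being oriented as `a → b → c → a` and all other edges towards `a`. -/
def starTriangleNext (a b c x : V) : V :=
  if x = a then b else if x = b then c else a

lemma starTriangleNext_starTriangleNext_ne (hab : a ≠ b) (hac : a ≠ c) (hbc : b ≠ c) (x : V) :
    starTriangleNext a b c (starTriangleNext a b c x) ≠ x := by
  grind [starTriangleNext]

lemma eq_or_eq_of_starTriangleNext_ne {x : V} (hx : starTriangleNext a b c x ≠ a) :
    x = a ∨ x = b := by
  grind [starTriangleNext]

lemma dArcs_starTriangleNext_le_one [Fintype V] {S T : Finset V} (hST : Disjoint S T) (ha : a ∈ S) :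
    dArcs (fun u v => starTriangleNext a b c u = v) S T ≤ 1 := by
  have eq_or_eq_of_tail {x : V} (hx : starTriangleNext a b c x ∈ T) : x = a ∨ x = b :=
    eq_or_eq_of_starTriangleNext_ne (ne_of_mem_of_not_mem hx (disjoint_left.mp hST ha))
  have notMem_of_center_tail (hT : starTriangleNext a b c a ∈ T) : b ∉ S := by
    rw [starTriangleNext, if_pos rfl] at hT
    exact disjoint_right.mp hST hT
  rw [dArcs_functional, card_le_one]
  simp only [mem_filter]
  rintro x ⟨hxS, hxT⟩ y ⟨hyS, hyT⟩
  rcases eq_or_eq_of_tail hxT with rfl | rfl <;> rcases eq_or_eq_of_tail hyT with rfl | rfl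
  · rfl
  · exact absurd hyS (notMem_of_center_tail hxT)
  · exact absurd hxS (notMem_of_center_tail hyT)
  · rfl

end StarTriangle

theorem stmt17_general {V : Type} [Fintype V] [DecidableEq V] (hV : 3 ≤ Fintype.card V) :
    ∃ (A : V → V → Prop) (_ : DecidableRel A),
      (∀ u v, A u v → ¬ A v u) ∧
      dArcs A univ univ = Fintype.card V ∧
      (∀ x, 1 ≤ outDeg A x) ∧
      (∃ x, outDeg A x = 1) ∧
      (∀ V₁ V₂ : Finset V, V₁ ∪ V₂ = univ → Disjoint V₁ V₂ →
        min (dArcs A V₁ V₂) (dArcs A V₂ V₁) ≤ 1) := by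
  obtain ⟨a, b, c, hab, hac, hbc⟩ := Fintype.two_lt_card_iff.mp hV
  refine ⟨fun u v => starTriangleNext a b c u = v, inferInstance, ?_, ?_,
    fun x => (outDeg_functional _ x).ge, ⟨a, outDeg_functional _ a⟩, ?_⟩
  · rintro u _ rfl
    exact starTriangleNext_starTriangleNext_ne hab hac hbc u
  · simp [dArcs_functional]
  · intro V₁ V₂ hcover hdisj
    rcases mem_union.mp (hcover ▸ mem_univ a) with ha | ha
    · exact min_le_of_left_le (dArcs_starTriangleNext_le_one hdisj ha)
    · exact min_le_of_right_le (dArcs_starTriangleNext_le_one hdisj.symm ha)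

/-- For every `n ≥ 4` there is a digraph with `n` vertices, `n` arcs, minimum outdegree
exactly 1, such that every bipartition `V₁, V₂` satisfies
`min{e(V₁,V₂), e(V₂,V₁)} ≤ 1`. -/
theorem stmt17 (n : ℕ) (hn : 4 ≤ n) :
    ∃ (A : Fin n → Fin n → Prop) (inst : DecidableRel A),
      (∀ v, ¬ A v v) ∧
      @dArcs (Fin n) _ _ A inst Finset.univ Finset.univ = n ∧
      (∀ x, 1 ≤ @outDeg (Fin n) _ A inst x) ∧
      (∃ x, @outDeg (Fin n) _ A inst x = 1) ∧
      (∀ V₁ V₂ : Finset (Fin n), V₁ ∪ V₂ = Finset.univ → Disjoint V₁ V₂ →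
        min (@dArcs (Fin n) _ _ A inst V₁ V₂) (@dArcs (Fin n) _ _ A inst V₂ V₁) ≤ 1) := by
  obtain ⟨A, inst, hasymm, hcard, hrest⟩ :=
    stmt17_general (V := Fin n) (by rw [Fintype.card_fin]; omega)
  exact ⟨A, inst, fun v h => hasymm v v h h, by simpa using hcard, hrest⟩
end
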